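/- Let A be an abelian category such that D(A) has Hom sets and coproducts, let T be an n-tilting object of A, and let H_T = T^{⊥>0} ∩ T^{⊥<0} be the heart of the associated t-structure on D(A). Then the class Y = ⋂_{k>0} Ker(Ext^k_A(T, ?)) coincides with A ∩ H_T (objects of A lying in the heart), Y is a cogenerating class of A, and every object M of A admits an exact sequence 0 → M → Y → T^1 → ⋯ → T^n → 0 with Y ∈ Y and each T^k ∈ Add(T). -/

import Mathlib

open CategoryTheory CategoryTheory.Limits CategoryTheory.Pretriangulated

universe w v u

variable {A : Type u} [Category.{v} A] [Abelian A] [HasCoproducts.{v} A]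
  [HasDerivedCategory.{w} A] [HasCoproducts.{v} (DerivedCategory A)] (T : A)

/-- `Add(T)`: direct summands of set-indexed coproducts of copies of `T` in `A`. -/
def addT : Set A :=
  {X | ∃ (I : Type v) (s : X ⟶ ∐ (fun _ : I => T)) (r : ∐ (fun _ : I => T) ⟶ X), s ≫ r = 𝟙 X}

/-- `Y = ⋂_{k>0} Ker(Ext^k_A(T, ?))`, with `Ext` computed as morphisms in the derived
category. -/
def YSet : Set A :=
  {N | ∀ k : ℤ, 0 < k → ∀ f : (DerivedCategory.singleFunctor A 0).obj T ⟶
    ((DerivedCategory.singleFunctor A 0).obj N)⟦k⟧, f = 0}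

/-- An exact sequence `0 → G → T^0 → ⋯ → T^n → 0` with all `T^k` in `Add(T)`. -/
def hasAddTCoresolution (n : ℕ) (G : A) : Prop :=
  ∃ S : ComposableArrows A (n + 1), S.Exact ∧ Mono (S.map' 0 1) ∧ Epi (S.map' n (n + 1)) ∧
    S.obj' 0 = G ∧ ∀ (i : ℕ) (_ : 1 ≤ i) (h2 : i ≤ n + 1), S.obj' i ∈ addT T

/-!
For `j = n, …, 1` in turn, `Ext^j(T, M)` is killed by a universal map from the stalk complex of
some `T^{(I)}`; by (T1) no new maps out of `T` appear in higher degrees. The result is a triangle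
`M → Y → Z → M[1]` in `D(A)` with `Y ∈ T^{⊥>0}` and `Z` an iterated extension of stalk complexes
of the `T^{(I)}` in degrees `0, …, n - 1`. So `Z`, and hence `Y`, lies in `D^{≥0}`. The generators
are coresolved by `Add(T)`, so nothing maps from them to `Y` in positive degrees and `Y`, hence
`Z`, lies in `D^{≤0}`. Therefore `Y` and `Z` are objects of `A`, and the extensions building `Z`
splice to an `Add(T)`-coresolution of it.

The index sets `I` exist because generators, and then by dimension shifting down from (T2) all
objects, receive only a set of maps from the shifts of `T`.
-/

open DerivedCategory

section Pretriangulated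

variable {D : Type*} [Category* D] [Preadditive D] [HasZeroObject D] [HasShift D ℤ]
  [∀ n : ℤ, (shiftFunctor D n).Additive] [Pretriangulated D] {Z : D} {Tr : Triangle D}

lemma small_hom_obj₂_of_distTriang (hTr : Tr ∈ distTriang D)
    (h₁ : Small.{v} (Z ⟶ Tr.obj₁)) (h₃ : Small.{v} (Z ⟶ Tr.obj₃)) :
    Small.{v} (Z ⟶ Tr.obj₂) := by
  let liftable := {c : Z ⟶ Tr.obj₃ // ∃ b : Z ⟶ Tr.obj₂, b ≫ Tr.mor₂ = c}
  refine small_of_surjective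
    (f := fun p : (Z ⟶ Tr.obj₁) × liftable => p.1 ≫ Tr.mor₁ + p.2.2.choose) fun b => ?_
  let c : liftable := ⟨b ≫ Tr.mor₂, b, rfl⟩
  have hc : (b - c.2.choose) ≫ Tr.mor₂ = 0 := by
    rw [Preadditive.sub_comp, c.2.choose_spec, sub_self]
  obtain ⟨g, hg⟩ := Triangle.coyoneda_exact₂ _ hTr _ hc
  exact ⟨(g, c), by simp [← hg]⟩

lemma subsingleton_hom_from_obj₂_of_distTriang (hTr : Tr ∈ distTriang D)
    (h₁ : Subsingleton (Tr.obj₁ ⟶ Z)) (h₃ : Subsingleton (Tr.obj₃ ⟶ Z)) :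
    Subsingleton (Tr.obj₂ ⟶ Z) := by
  refine subsingleton_of_forall_eq 0 fun f => ?_
  obtain ⟨g, rfl⟩ := Triangle.yoneda_exact₂ _ hTr f (Subsingleton.elim _ _)
  rw [Subsingleton.elim g 0, comp_zero]

lemma subsingleton_hom_obj₂_shift_of_distTriang (hTr : Tr ∈ distTriang D)
    (hsurj : Function.Surjective fun f : Z ⟶ Tr.obj₃ => f ≫ Tr.mor₃)
    (h₃ : Subsingleton (Z ⟶ Tr.obj₃⟦(1 : ℤ)⟧)) : Subsingleton (Z ⟶ Tr.obj₂⟦(1 : ℤ)⟧) := by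
  refine subsingleton_of_forall_eq 0 fun f => ?_
  obtain ⟨g, hg⟩ : ∃ g : Z ⟶ Tr.obj₁⟦(1 : ℤ)⟧, f = g ≫ (-Tr.mor₁⟦(1 : ℤ)⟧') :=
    Triangle.coyoneda_exact₁ _ (rot_of_distTriang _ hTr) f (h₃.elim _ _)
  obtain ⟨e, rfl⟩ : ∃ e, e ≫ Tr.mor₃ = g := hsurj g
  rw [hg, Preadditive.comp_neg, Category.assoc, comp_distTriang_mor_zero₃₁ _ hTr, comp_zero,
    neg_zero]

end Pretriangulated

section Coresolution

variable {C : Type u} [Category.{v} C] [Abelian C]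

/-- `X` has a finite coresolution `0 → X → P⁰ → ⋯ → Pᵏ⁻¹ → 0` of length `k` with terms in `P`,
encoded by the short exact sequences into which it breaks up. -/
inductive HasFiniteCoresolution (P : Set C) : ℕ → C → Prop
  | zero {X : C} (hX : IsZero X) : HasFiniteCoresolution P 0 X
  | succ {k : ℕ} {S : ShortComplex C} (hS : S.ShortExact) (h₂ : S.X₂ ∈ P)
      (h₃ : HasFiniteCoresolution P k S.X₃) : HasFiniteCoresolution P (k + 1) S.X₁

lemma exact_epi_comp_iff {X' X Y Z : C} (p : X' ⟶ X) [Epi p] {f : X ⟶ Y} {g : Y ⟶ Z}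
    (w : f ≫ g = 0) :
    (ShortComplex.mk (p ≫ f) g (by rw [Category.assoc, w, comp_zero])).Exact ↔
      (ShortComplex.mk f g w).Exact :=
  ShortComplex.exact_iff_of_epi_of_isIso_of_mono { τ₁ := p, τ₂ := 𝟙 _, τ₃ := 𝟙 _ }

lemma exact_comp_mono_iff {X Y Z Z' : C} {f : X ⟶ Y} {g : Y ⟶ Z} (i : Z ⟶ Z') [Mono i]
    (w : f ≫ g = 0) :
    (ShortComplex.mk f (g ≫ i) (by rw [reassoc_of% w, zero_comp])).Exact ↔
      (ShortComplex.mk f g w).Exact :=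
  (ShortComplex.exact_iff_of_epi_of_isIso_of_mono
    { τ₁ := 𝟙 _, τ₂ := 𝟙 _, τ₃ := i : ShortComplex.mk f g w ⟶ ShortComplex.mk f (g ≫ i) _ }).symm

lemma shortExact_cokernel_desc {S : ShortComplex C} (hS : S.Exact) :
    (ShortComplex.mk (cokernel.desc S.f S.g S.zero) (cokernel.π S.g)
      (by simp [← cancel_epi (cokernel.π S.f)])).ShortExact := by
  refine ShortComplex.ShortExact.mk' ?_ hS.mono_cokernelDesc inferInstance
  rw [← exact_epi_comp_iff (cokernel.π S.f)]
  simpa only [cokernel.π_desc] using ShortComplex.exact_cokernel S.g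

lemma hasFiniteCoresolution_cokernel {P : Set C} : ∀ {n : ℕ} {S : ComposableArrows C (n + 1)},
    S.Exact → Epi (S.map' n (n + 1)) →
    (∀ (i : ℕ) (_ : 2 ≤ i) (_ : i ≤ n + 1), S.obj' i ∈ P) →
    HasFiniteCoresolution P n (cokernel (S.map' 0 1))
  | 0, _, _, hlast, _ => .zero (isZero_cokernel_of_epi _)
  | _ + 1, _, hS, hlast, hP =>
    .succ (shortExact_cokernel_desc (hS.exact' 0 1 2)) (hP 2 le_rfl (by lia))
      (hasFiniteCoresolution_cokernel hS.δ₀ hlast fun i _ _ => hP (i + 1) (by lia) (by lia))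

lemma hasFiniteCoresolution_of_composableArrows {P : Set C} {n : ℕ}
    {S : ComposableArrows C (n + 1)} (hS : S.Exact) (hfirst : Mono (S.map' 0 1))
    (hlast : Epi (S.map' n (n + 1)))
    (hP : ∀ (i : ℕ) (_ : 1 ≤ i) (_ : i ≤ n + 1), S.obj' i ∈ P) :
    HasFiniteCoresolution P (n + 1) (S.obj' 0) :=
  .succ (.mk' (ShortComplex.exact_cokernel (S.map' 0 1)) hfirst inferInstance)
    (hP 1 le_rfl (by lia))
    (hasFiniteCoresolution_cokernel hS hlast fun i _ hi => hP i (by lia) hi)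

lemma exists_composableArrows_of_hasFiniteCoresolution {P : Set C} {n : ℕ} {Z : C}
    (hZ : HasFiniteCoresolution P n Z) :
    ∀ {Y : C} (q : Y ⟶ Z) [Epi q], ∃ (S : ComposableArrows C n) (e : Y = S.left),
      (∀ (i : ℕ) (_ : 1 ≤ i) (_ : i ≤ n), S.obj' i ∈ P) ∧
      ∀ {X : C} (f : X ⟶ Y) (w : f ≫ q = 0), (ShortComplex.mk f q w).Exact →
        (S.precomp (f ≫ eqToHom e)).Exact ∧
          Epi ((S.precomp (f ≫ eqToHom e)).map' n (n + 1)) := by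
  induction hZ with
  | zero hZ =>
    intro Y q _
    refine ⟨ComposableArrows.mk₀ Y, rfl, fun i _ _ => by lia, fun f w hf => ?_⟩
    have : Epi f := (ShortComplex.exact_iff_epi _ (hZ.eq_of_tgt _ _)).1 hf
    exact ⟨ComposableArrows.exact₁ _, inferInstanceAs (Epi (f ≫ 𝟙 Y))⟩
  | @succ n T hT hP _ ih =>
    intro Y q _
    have := hT.mono_f
    have := hT.epi_g
    obtain ⟨S, e, hSP, hS⟩ := ih T.g
    obtain ⟨htail, hlast⟩ := hS (q ≫ T.f) _ ((exact_epi_comp_iff q T.zero).2 hT.exact)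
    refine ⟨S.precomp ((q ≫ T.f) ≫ eqToHom e), rfl, ?_, fun f w hf => ⟨?_, hlast⟩⟩
    · rintro (_ | _ | i) h₁ hi
      · lia
      · exact (e ▸ hP : S.left ∈ P)
      · exact hSP (i + 1) (by lia) (by lia)
    · have hhead : (ShortComplex.mk (f ≫ 𝟙 Y) ((q ≫ T.f) ≫ eqToHom e)
          (by simp [reassoc_of% w])).Exact := by
        simpa only [Category.comp_id, Category.assoc] using
          (exact_comp_mono_iff (T.f ≫ eqToHom e) w).2 hf
      exact ComposableArrows.exact_of_δ₀ hhead.exact_toComposableArrows htail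

lemma exists_composableArrows_of_shortExact {P : Set C} {n : ℕ} {E : ShortComplex C}
    (hE : E.ShortExact) (h₃ : HasFiniteCoresolution P n E.X₃) :
    ∃ S : ComposableArrows C (n + 1), S.Exact ∧ Mono (S.map' 0 1) ∧ Epi (S.map' n (n + 1)) ∧
      S.obj' 0 = E.X₁ ∧ S.obj' 1 = E.X₂ ∧
      ∀ (i : ℕ) (_ : 2 ≤ i) (_ : i ≤ n + 1), S.obj' i ∈ P := by
  have := hE.mono_f
  have := hE.epi_g
  obtain ⟨S, e, hP, hS⟩ := exists_composableArrows_of_hasFiniteCoresolution h₃ E.g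
  obtain ⟨hexact, hlast⟩ := hS E.f E.zero hE.exact
  refine ⟨S.precomp (E.f ≫ eqToHom e), hexact, inferInstanceAs (Mono (E.f ≫ eqToHom e)), hlast,
    rfl, e.symm, ?_⟩
  rintro (_ | i) h₂ hi
  · lia
  · exact hP i (by lia) (by lia)

end Coresolution

section StalkComplexes

variable {C : Type u} [Category.{v} C] [Abelian C] [HasDerivedCategory.{w} C]

/-- Morphisms out of a stalk complex in degree `a'` are morphisms into a shift out of the same
stalk in degree `a = a' - n`. -/
noncomputable def homSingleShiftEquiv (X : C) (Y : DerivedCategory C) (n a a' : ℤ)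
    (h : n + a = a') :
    ((singleFunctor C a').obj X ⟶ Y) ≃ ((singleFunctor C a).obj X ⟶ Y⟦n⟧) :=
  (Functor.FullyFaithful.ofFullyFaithful (shiftFunctor (DerivedCategory C) n)).homEquiv.trans
    (((singleFunctors C).shiftIso n a a' h).app X).homFromEquiv

lemma hom_single_shift_eq_zero_of_neg {X Y : C} {k : ℤ} (hk : k < 0)
    (f : (singleFunctor C 0).obj X ⟶ ((singleFunctor C 0).obj Y)⟦k⟧) : f = 0 :=
  have : (((singleFunctor C 0).obj Y)⟦k⟧).IsGE (-k) := TStructure.t.isGE_shift _ 0 k (-k)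
  TStructure.t.zero f 0 (-k)

lemma preservesColimit_singleFunctor {J : Type*} [Category* J] (F : J ⥤ C)
    [PreservesColimit F (singleFunctor C 0)] (m : ℤ) :
    PreservesColimit F (singleFunctor C m) :=
  preservesColimit_of_natIso F ((singleFunctors C).shiftIso (-m) m 0 (by lia))

/-- A stalk complex in degree `a` is recovered by its cohomology in degree `a`. -/
noncomputable def singleHomologyIso (X : C) (a : ℤ) :
    (homologyFunctor C a).obj ((singleFunctor C a).obj X) ≅ X :=
  (homologyFunctorFactors C a).app _ ≪≫
    HomologicalComplex.singleObjHomologySelfIso (ComplexShape.up ℤ) a X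

lemma shortExact_homology_of_distTriang {Tr : Triangle (DerivedCategory C)}
    (hTr : Tr ∈ distTriang (DerivedCategory C)) (a : ℤ) [Tr.obj₁.IsLE a] [Tr.obj₃.IsGE a] :
    (ShortComplex.mk ((homologyFunctor C a).map Tr.mor₁) ((homologyFunctor C a).map Tr.mor₂)
      (by rw [← Functor.map_comp, comp_distTriang_mor_zero₁₂ _ hTr, Functor.map_zero])).ShortExact
    where
  exact := HomologySequence.exact₂ Tr hTr a
  mono_f := (HomologySequence.mono_homologyMap_mor₁_iff Tr hTr (a - 1) a).2
    ((isZero_of_isGE Tr.obj₃ a (a - 1) (by lia)).eq_of_src _ _)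
  epi_g := (HomologySequence.epi_homologyMap_mor₂_iff Tr hTr a (a + 1)).2
    ((isZero_of_isLE Tr.obj₁ a (a + 1) (by lia)).eq_of_tgt _ _)

lemma exists_shortExact_of_distTriang {Tr : Triangle (DerivedCategory C)}
    (hTr : Tr ∈ distTriang (DerivedCategory C)) {a : ℤ} {X Y Z : C}
    (eX : Tr.obj₁ ≅ (singleFunctor C a).obj X) (eY : Tr.obj₂ ≅ (singleFunctor C a).obj Y)
    (eZ : Tr.obj₃ ≅ (singleFunctor C a).obj Z) :
    ∃ (f : X ⟶ Y) (g : Y ⟶ Z) (w : f ≫ g = 0), (ShortComplex.mk f g w).ShortExact := by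
  have : Tr.obj₁.IsLE a := TStructure.t.isLE_of_iso eX.symm a
  have : Tr.obj₃.IsGE a := TStructure.t.isGE_of_iso eZ.symm a
  let iX := (homologyFunctor C a).mapIso eX ≪≫ singleHomologyIso X a
  let iY := (homologyFunctor C a).mapIso eY ≪≫ singleHomologyIso Y a
  let iZ := (homologyFunctor C a).mapIso eZ ≪≫ singleHomologyIso Z a
  have hH := shortExact_homology_of_distTriang hTr a
  have hzero : (homologyFunctor C a).map Tr.mor₁ ≫ (homologyFunctor C a).map Tr.mor₂ = 0 := by
    rw [← Functor.map_comp, comp_distTriang_mor_zero₁₂ _ hTr, Functor.map_zero]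
  refine ⟨iX.inv ≫ (homologyFunctor C a).map Tr.mor₁ ≫ iY.hom,
    iY.inv ≫ (homologyFunctor C a).map Tr.mor₂ ≫ iZ.hom, ?_, ?_⟩
  · simp [reassoc_of% hzero]
  · exact ShortComplex.shortExact_of_iso (ShortComplex.isoMk iX iY iZ) hH

lemma exists_epi_homologyFunctor_map {𝒢 : Set C} (h𝒢 : ∀ M : C, ∃ G ∈ 𝒢, ∃ p : G ⟶ M, Epi p)
    (X : DerivedCategory C) (m : ℤ) :
    ∃ G ∈ 𝒢, ∃ f : (singleFunctor C m).obj G ⟶ X, Epi ((homologyFunctor C m).map f) := by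
  let K := Q.objPreimage X
  let e : Q.obj K ≅ X := Q.objObjPreimageIso X
  obtain ⟨G, hG, p, hp⟩ := h𝒢 (K.cycles m)
  let φ : (HomologicalComplex.single C (ComplexShape.up ℤ) m).obj G ⟶ K :=
    HomologicalComplex.mkHomFromSingle (p ≫ K.iCycles m) (by simp)
  have hcycles : (HomologicalComplex.singleObjCyclesSelfIso (ComplexShape.up ℤ) m G).inv ≫
      HomologicalComplex.cyclesMap φ m = p := by
    rw [← cancel_mono (K.iCycles m)]
    simp [φ]
  have hφ : Epi (HomologicalComplex.homologyMap φ m) := by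
    have : Epi (HomologicalComplex.homologyπ _ m ≫ HomologicalComplex.homologyMap φ m) := by
      rw [HomologicalComplex.homologyπ_naturality, (Iso.inv_comp_eq _).1 hcycles]
      infer_instance
    exact epi_of_epi (HomologicalComplex.homologyπ _ m) _
  let f : (singleFunctor C m).obj G ⟶ Q.obj K := Q.map φ
  have hf : Epi ((homologyFunctor C m).map f) :=
    ((MorphismProperty.epimorphisms C).arrow_mk_iso_iff
      (((Functor.mapArrowFunctor _ _).mapIso (homologyFunctorFactors C m)).app (Arrow.mk φ))).2 hφ
  refine ⟨G, hG, f ≫ e.hom, ?_⟩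
  rw [Functor.map_comp]
  infer_instance

end StalkComplexes

section Vanishing

variable {C : Type u} [Category.{v} C] [Abelian C] [HasDerivedCategory.{w} C] {T : C}
  {X Y : DerivedCategory C} {a b : ℤ}

/-- `Hom(T, X[j]) = 0` for all `j > a`, so that `a = 0` gives the class `T^{⊥>0}`. The shift is
put on the other side, by placing `T` in degree `j`. -/
def HomVanishesAbove (T : C) (a : ℤ) (X : DerivedCategory C) : Prop :=
  ∀ j, a < j → Subsingleton ((singleFunctor C j).obj T ⟶ X)

/-- All `Hom(T, X[j])` are small with respect to the universe of the morphisms of `C`, which is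
the universe of the sets indexing coproducts. This is not automatic, since the morphisms of
`DerivedCategory C` live in an unrelated universe. -/
def HasSmallHoms (T : C) (X : DerivedCategory C) : Prop :=
  ∀ j, Small.{v} ((singleFunctor C j).obj T ⟶ X)

lemma homVanishesAbove_iff : HomVanishesAbove T a X ↔
    ∀ k, a < k → ∀ f : (singleFunctor C 0).obj T ⟶ X⟦k⟧, f = 0 :=
  forall₂_congr fun k _ => (homSingleShiftEquiv T X k 0 k (add_zero k)).subsingleton_congr.trans
    (subsingleton_iff_forall_eq 0)

lemma HomVanishesAbove.of_iso (h : HomVanishesAbove T a X) (e : X ≅ Y) :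
    HomVanishesAbove T a Y :=
  fun j hj => have := h j hj; e.homToEquiv.symm.subsingleton

lemma homVanishesAbove_shift_iff (n : ℤ) (h : n + b = a) :
    HomVanishesAbove T b (X⟦n⟧) ↔ HomVanishesAbove T a X := by
  refine ⟨fun H j hj => ?_, fun H j hj => ?_⟩
  · have := H (j - n) (by lia)
    exact (homSingleShiftEquiv T X n (j - n) j (by lia)).subsingleton
  · have := H (n + j) (by lia)
    exact (homSingleShiftEquiv T X n j (n + j) rfl).symm.subsingleton

lemma HasSmallHoms.shift (h : HasSmallHoms T X) (n : ℤ) : HasSmallHoms T (X⟦n⟧) :=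
  fun j => (small_congr (homSingleShiftEquiv T X n j (n + j) rfl)).1 (h (n + j))

lemma homVanishesAbove_single {P : C} (hP : P ∈ YSet T) (a : ℤ) :
    HomVanishesAbove T a ((singleFunctor C a).obj P) :=
  (homVanishesAbove_shift_iff a (add_zero a)).1
    ((homVanishesAbove_iff.2 hP).of_iso
      (((singleFunctors C).shiftIso a 0 a (add_zero a)).app P).symm)

lemma hasSmallHoms_single {P : C} (hP : P ∈ YSet T) (a : ℤ) :
    HasSmallHoms T ((singleFunctor C a).obj P) := by
  intro j
  rcases lt_trichotomy j a with hj | rfl | hj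
  · have : Subsingleton ((singleFunctor C j).obj T ⟶ (singleFunctor C a).obj P) :=
      subsingleton_of_forall_eq 0 fun f => TStructure.t.zero f j a
    exact small_subsingleton _
  · exact small_of_surjective (singleFunctor C j).map_surjective
  · have := homVanishesAbove_single hP a j hj
    exact small_subsingleton _

lemma HasFiniteCoresolution.homVanishesAbove {P : Set C} {k : ℕ} {G : C}
    (hG : HasFiniteCoresolution P k G) (hP : ∀ Q ∈ P, HomVanishesAbove Q a X) :
    HomVanishesAbove G a X := by
  induction hG with
  | zero hG =>
    exact fun j _ => subsingleton_of_forall_eq 0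
      fun f => ((singleFunctor C j).map_isZero hG).eq_of_src f 0
  | @succ _ S hS h₂ _ ih =>
    intro j hj
    refine (homSingleShiftEquiv S.X₁ X j 0 j (add_zero j)).subsingleton_congr.2 ?_
    refine subsingleton_hom_from_obj₂_of_distTriang
      (inv_rot_of_distTriang _ hS.singleTriangle_distinguished) ?_ ?_
    · have := ih (j + 1) (by lia)
      exact ((((singleFunctors C).shiftIso (-1) 1 0 (by lia)).app S.X₃).homFromEquiv.trans
        (homSingleShiftEquiv S.X₃ X j 1 (j + 1) rfl).symm).subsingleton
    · have := hP _ h₂ j hj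
      exact (homSingleShiftEquiv S.X₂ X j 0 j (add_zero j)).symm.subsingleton

lemma HasFiniteCoresolution.hasSmallHoms {P : Set C} (hP : P ⊆ YSet T) {k : ℕ} {G : C}
    (hG : HasFiniteCoresolution P k G) : HasSmallHoms T ((singleFunctor C 0).obj G) := by
  induction hG with
  | zero hG =>
    intro j
    have : Subsingleton ((singleFunctor C j).obj T ⟶ (singleFunctor C 0).obj _) :=
      subsingleton_of_forall_eq 0 fun f => ((singleFunctor C 0).map_isZero hG).eq_of_tgt f 0
    exact small_subsingleton _
  | succ hS h₂ _ ih =>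
    exact fun j => small_hom_obj₂_of_distTriang
      (inv_rot_of_distTriang _ hS.singleTriangle_distinguished) (ih.shift (-1) j)
      (hasSmallHoms_single (hP h₂) 0 j)

variable {𝒢 : Set C} (h𝒢 : ∀ M : C, ∃ G ∈ 𝒢, ∃ p : G ⟶ M, Epi p)
include h𝒢

lemma isLE_of_homVanishesAbove (hX : ∀ G ∈ 𝒢, HomVanishesAbove G a X) : X.IsLE a := by
  refine (isLE_iff X a).2 fun j hj => ?_
  obtain ⟨G, hG, f, hf⟩ := exists_epi_homologyFunctor_map h𝒢 X j
  have := hX G hG j hj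
  rw [Subsingleton.elim f 0, Functor.map_zero] at hf
  exact IsZero.of_epi_zero ((homologyFunctor C j).obj ((singleFunctor C j).obj G)) _

lemma hasSmallHoms_of_generating (h𝒢T : ∀ G ∈ 𝒢, HasSmallHoms T ((singleFunctor C 0).obj G))
    (hT : ∀ N : C, HomVanishesAbove T a ((singleFunctor C 0).obj N)) (N : C) :
    HasSmallHoms T ((singleFunctor C 0).obj N) := by
  suffices ∀ j ≤ a + 1, ∀ N, Small.{v} ((singleFunctor C j).obj T ⟶ (singleFunctor C 0).obj N) by
    intro j
    rcases le_or_gt j a with hj | hj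
    · exact this j (by lia) N
    · have := hT N j hj
      exact small_subsingleton _
  intro j hj
  induction j, hj using Int.leInductionDown with
  | base =>
    intro N
    have := hT N (a + 1) (by lia)
    exact small_subsingleton _
  | pred j _ ih =>
    intro N
    obtain ⟨G, hG, p, hp⟩ := h𝒢 N
    have hS : (ShortComplex.mk (kernel.ι p) p (kernel.condition p)).ShortExact :=
      .mk' (ShortComplex.exact_kernel p) inferInstance hp
    refine small_hom_obj₂_of_distTriang (rot_of_distTriang _ hS.singleTriangle_distinguished)
      (h𝒢T G hG (j - 1)) ?_
    exact (small_congr (homSingleShiftEquiv T _ 1 (j - 1) j (by lia))).1 (ih (kernel p))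

end Vanishing

section StalkTowers

variable {C : Type u} [Category.{v} C] [Abelian C] [HasDerivedCategory.{w} C]

/-- `X` is an iterated extension of stalk complexes with entries `P⁰, …, Pᵏ⁻¹` in `P`, placed in
degrees `a, …, a + k - 1`. If `X` itself is a stalk complex in degree `a`, this amounts to a
coresolution by the `Pⁱ`. -/
inductive IsStalkTower (P : Set C) : ℕ → ℤ → DerivedCategory C → Prop
  | zero {a : ℤ} {X : DerivedCategory C} (hX : IsZero X) : IsStalkTower P 0 a X
  | succ {k : ℕ} {a : ℤ} {W X : DerivedCategory C} {Q : C} (hQ : Q ∈ P) {u : W ⟶ X}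
      {v : X ⟶ (singleFunctor C a).obj Q} {w : (singleFunctor C a).obj Q ⟶ W⟦(1 : ℤ)⟧}
      (hTr : Triangle.mk u v w ∈ distTriang (DerivedCategory C))
      (hW : IsStalkTower P k (a + 1) W) : IsStalkTower P (k + 1) a X

variable {P : Set C} {k : ℕ} {a : ℤ} {X : DerivedCategory C}

lemma IsStalkTower.isGE (h : IsStalkTower P k a X) : X.IsGE a := by
  induction h with
  | zero hX => exact (isGE_iff _ _).2 fun i _ => Functor.map_isZero _ hX
  | @succ _ a W _ Q _ _ _ _ hTr _ ih =>
    exact TStructure.t.isGE₂ _ hTr a (TStructure.t.isGE_of_ge W a (a + 1))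
      (inferInstanceAs (((singleFunctor C a).obj Q).IsGE a))

lemma IsStalkTower.hasFiniteCoresolution (h : IsStalkTower P k a X) :
    ∀ {Z : C}, (X ≅ (singleFunctor C a).obj Z) → HasFiniteCoresolution P k Z := by
  induction h with
  | @zero a _ hX =>
    intro Z e
    exact .zero (((homologyFunctor C a).map_isZero (hX.of_iso e.symm)).of_iso
      (singleHomologyIso Z a).symm)
  | @succ k a W X Q hQ u v w hTr hW ih =>
    intro Z e
    have : W.IsGE (a + 1) := hW.isGE
    have : X.IsLE a := TStructure.t.isLE_of_iso e.symm a
    have : W.IsLE (a + 1) := TStructure.t.isLE₂ _ (inv_rot_of_distTriang _ hTr) (a + 1)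
      (TStructure.t.isLE_shift ((singleFunctor C a).obj Q) a (-1) (a + 1))
      (TStructure.t.isLE_of_le X a (a + 1))
    obtain ⟨Z', ⟨eW⟩⟩ := exists_iso_singleFunctor_obj_of_isGE_of_isLE W (a + 1)
    obtain ⟨f, g, w, hS⟩ := exists_shortExact_of_distTriang (rot_of_distTriang _ hTr) e
      (Iso.refl ((singleFunctor C a).obj Q)) ((shiftFunctor _ (1 : ℤ)).mapIso eW ≪≫
        ((singleFunctors C).shiftIso 1 a (a + 1) (add_comm 1 a)).app Z')
    exact .succ hS hQ (ih eW)

end StalkTowers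

section Tilting

variable {C : Type u} [Category.{v} C] [Abelian C] [HasCoproducts.{v} C]
  [HasDerivedCategory.{w} C] {T : C} {a : ℤ} {X : DerivedCategory C}

lemma addT_subset_YSet (hT : ∀ I : Type v, ∐ (fun _ : I => T) ∈ YSet T) : addT T ⊆ YSet T := by
  rintro P ⟨I, s, r, hsr⟩ k hk f
  have hf : f ≫ ((singleFunctor C 0).map s)⟦k⟧' = 0 := hT I k hk _
  calc f = f ≫ ((singleFunctor C 0).map (s ≫ r))⟦k⟧' := by simp [hsr]
    _ = 0 := by rw [Functor.map_comp, Functor.map_comp, reassoc_of% hf, zero_comp]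

variable [hpres : ∀ I : Type v,
  PreservesColimit (Discrete.functor fun _ : I => T) (singleFunctor C 0)]
include hpres

/-- The stalk complex of `T^{(I)}` in any degree is the coproduct of the stalk complexes of `T`. -/
noncomputable def isColimitSingleSigma (I : Type v) (a : ℤ) :
    IsColimit (Cofan.mk ((singleFunctor C a).obj (∐ fun _ : I => T))
      fun i => (singleFunctor C a).map (Sigma.ι (fun _ : I => T) i)) :=
  have := preservesColimit_singleFunctor (Discrete.functor fun _ : I => T) a
  isColimitOfHasCoproductOfPreservesColimit (singleFunctor C a) _

lemma HomVanishesAbove.of_mem_addT (hX : HomVanishesAbove T a X) {P : C} (hP : P ∈ addT T) :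
    HomVanishesAbove P a X := by
  obtain ⟨I, s, r, hsr⟩ := hP
  refine fun j hj => subsingleton_of_forall_eq 0 fun f => ?_
  have hr : (singleFunctor C j).map r ≫ f = 0 :=
    have := hX j hj
    Cofan.IsColimit.hom_ext (isColimitSingleSigma I j) _ _ fun i => Subsingleton.elim _ _
  calc f = (singleFunctor C j).map (s ≫ r) ≫ f := by simp [hsr]
    _ = 0 := by rw [Functor.map_comp, Category.assoc, hr, comp_zero]

lemma exists_universal_hom (a : ℤ) (hX : Small.{v} ((singleFunctor C a).obj T ⟶ X)) :
    ∃ (I : Type v) (φ : (singleFunctor C a).obj (∐ fun _ : I => T) ⟶ X),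
      Function.Surjective fun f : (singleFunctor C a).obj T ⟶ _ => f ≫ φ := by
  let I := Shrink.{v} ((singleFunctor C a).obj T ⟶ X)
  refine ⟨I, Cofan.IsColimit.desc (isColimitSingleSigma I a) fun i => (equivShrink _).symm i,
    fun f => ⟨_, (Cofan.IsColimit.fac (isColimitSingleSigma I a) _ (equivShrink _ f)).trans ?_⟩⟩
  exact Equiv.symm_apply_apply _ f

variable (hT : ∀ I : Type v, ∐ (fun _ : I => T) ∈ YSet T)
include hT

lemma exists_distTriang_homVanishesAbove_of_succ (hsmall : HasSmallHoms T X)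
    (hX : HomVanishesAbove T (a + 1) X) :
    ∃ (Q : C) (_ : Q ∈ addT T) (Y : DerivedCategory C) (f : X ⟶ Y)
      (g : Y ⟶ (singleFunctor C a).obj Q) (h : (singleFunctor C a).obj Q ⟶ X⟦(1 : ℤ)⟧),
      Triangle.mk f g h ∈ distTriang (DerivedCategory C) ∧
        HasSmallHoms T Y ∧ HomVanishesAbove T a Y := by
  obtain ⟨I, h, hh⟩ := exists_universal_hom a (hsmall.shift 1 a)
  obtain ⟨Y, f, g, hTr⟩ := distinguished_cocone_triangle₂ h
  refine ⟨_, ⟨I, 𝟙 _, 𝟙 _, Category.comp_id _⟩, Y, f, g, h, hTr,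
    fun j => small_hom_obj₂_of_distTriang hTr (hsmall j) (hasSmallHoms_single (hT I) a j), ?_⟩
  refine (homVanishesAbove_shift_iff 1 (b := a - 1) (by lia)).1 fun j hj => ?_
  refine subsingleton_hom_obj₂_shift_of_distTriang hTr ?_
    ((homVanishesAbove_shift_iff 1 (by lia)).2 (homVanishesAbove_single (hT I) a) j hj)
  rcases eq_or_ne j a with rfl | hja
  · exact hh
  · have := (homVanishesAbove_shift_iff 1 (add_comm 1 a)).2 hX j (by lia)
    exact fun g => ⟨0, Subsingleton.elim (α := (singleFunctor C j).obj T ⟶ X⟦(1 : ℤ)⟧) _ _⟩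

lemma exists_distTriang_isStalkTower (k : ℕ) : ∀ {a : ℤ}, HasSmallHoms T X →
    HomVanishesAbove T (a + k) X →
    ∃ (Y Z : DerivedCategory C) (f : X ⟶ Y) (g : Y ⟶ Z) (h : Z ⟶ X⟦(1 : ℤ)⟧),
      Triangle.mk f g h ∈ distTriang (DerivedCategory C) ∧
        HasSmallHoms T Y ∧ HomVanishesAbove T a Y ∧ IsStalkTower (addT T) k a Z := by
  induction k with
  | zero =>
    intro a hsmall hX
    exact ⟨X, _, 𝟙 X, 0, 0, contractible_distinguished X, hsmall, by simpa using hX,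
      .zero (isZero_zero _)⟩
  | succ k ih =>
    intro a hsmall hX
    obtain ⟨X', Z', f', g', h', hTr', hsmall', hX', hZ'⟩ := ih (a := a + 1) hsmall
      (by rwa [add_assoc, add_comm 1, ← Nat.cast_succ])
    obtain ⟨Q, hQ, Y, f, g, h, hTr, hY, hY'⟩ :=
      exists_distTriang_homVanishesAbove_of_succ hT hsmall' hX'
    obtain ⟨Z, p, q, hTrZ⟩ := distinguished_cocone_triangle (f' ≫ f)
    exact ⟨Y, Z, f' ≫ f, p, q, hTrZ, hY, hY',
      .succ hQ (Triangulated.someOctahedron rfl hTr' hTr hTrZ).mem hZ'⟩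

lemma exists_shortExact_YSet_of_tilting {n k : ℕ}
    (hpd : ∀ N : C, HomVanishesAbove T n ((singleFunctor C 0).obj N)) {𝒢 : Set C}
    (h𝒢 : ∀ M : C, ∃ G ∈ 𝒢, ∃ p : G ⟶ M, Epi p)
    (hres : ∀ G ∈ 𝒢, HasFiniteCoresolution (addT T) k G) (M : C) :
    ∃ (Y Z : C) (f : M ⟶ Y) (g : Y ⟶ Z) (w : f ≫ g = 0),
      (ShortComplex.mk f g w).ShortExact ∧ Y ∈ YSet T ∧ HasFiniteCoresolution (addT T) n Z := by
  have hsmall : HasSmallHoms T ((singleFunctor C 0).obj M) := hasSmallHoms_of_generating h𝒢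
    (fun G hG => (hres G hG).hasSmallHoms (addT_subset_YSet hT)) hpd M
  obtain ⟨Y, Z, f, g, h, hTr, -, hY, hZ⟩ :=
    exists_distTriang_isStalkTower hT n (a := 0) hsmall (by simpa using hpd M)
  have : Z.IsGE 0 := hZ.isGE
  have : Y.IsGE 0 := TStructure.t.isGE₂ _ hTr 0
    (inferInstanceAs (((singleFunctor C 0).obj M).IsGE 0)) hZ.isGE
  have : Y.IsLE 0 := isLE_of_homVanishesAbove h𝒢
    fun G hG => (hres G hG).homVanishesAbove fun _ => hY.of_mem_addT
  have hM : (((singleFunctor C 0).obj M)⟦(1 : ℤ)⟧).IsLE 0 :=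
    have := TStructure.t.isLE_shift ((singleFunctor C 0).obj M) 0 1 (-1)
    TStructure.t.isLE_of_le _ (-1) 0
  have : Z.IsLE 0 := TStructure.t.isLE₂ _ (rot_of_distTriang _ hTr) 0 ‹Y.IsLE 0› hM
  obtain ⟨Y', ⟨eY⟩⟩ := exists_iso_singleFunctor_obj_of_isGE_of_isLE Y 0
  obtain ⟨Z', ⟨eZ⟩⟩ := exists_iso_singleFunctor_obj_of_isGE_of_isLE Z 0
  obtain ⟨f', g', w, hS⟩ := exists_shortExact_of_distTriang hTr (Iso.refl _) eY eZ
  exact ⟨Y', Z', f', g', w, hS, homVanishesAbove_iff.1 (hY.of_iso eY),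
    hZ.hasFiniteCoresolution eZ⟩

end Tilting

/-- Let `T` be an `n`-tilting object of an abelian category `A` whose derived category has
Hom sets and coproducts, i.e.: (T0) coproducts of copies of `T` agree in `A` and `D(A)`;
(T1) `Ext^k_A(T, T^{(I)}) = 0` for `k > 0`; (T2) `T` has projective dimension `≤ n`;
(T3) some generating class `𝒢` of `A` admits `Add(T)`-coresolutions of length `n`.
Let `H_T = T^{⊥>0} ∩ T^{⊥<0}` be the heart of the associated t-structure.  Then
`Y = ⋂_{k>0} Ker Ext^k(T,-)` coincides with `A ∩ H_T`, `Y` is a cogenerating class of `A`,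
and every object `M` of `A` admits an exact sequence `0 → M → Y → T^1 → ⋯ → T^n → 0` with
`Y ∈ 𝒴` and all `T^k ∈ Add(T)`. -/
theorem stmt15 (n : ℕ)
    (hsame : ∀ I : Type v, IsIso (Sigma.desc
      (fun i : I => (DerivedCategory.singleFunctor A 0).map
        (Sigma.ι (fun _ : I => T) i))))
    (hext : ∀ (k : ℤ), 0 < k → ∀ I : Type v,
      ∀ f : (DerivedCategory.singleFunctor A 0).obj T ⟶
        ((DerivedCategory.singleFunctor A 0).obj (∐ (fun _ : I => T)))⟦k⟧, f = 0)
    (hpd : ∀ (k : ℤ), (n : ℤ) < k → ∀ N : A,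
      ∀ f : (DerivedCategory.singleFunctor A 0).obj T ⟶
        ((DerivedCategory.singleFunctor A 0).obj N)⟦k⟧, f = 0)
    (hT3 : ∃ 𝒢 : Set A, (∀ M : A, ∃ G ∈ 𝒢, ∃ p : G ⟶ M, Epi p) ∧
      ∀ G ∈ 𝒢, hasAddTCoresolution T n G) :
    -- `Y` coincides with `A ∩ H_T` ...
    (YSet T = {N : A |
      (∀ k : ℤ, 0 < k → ∀ f : (DerivedCategory.singleFunctor A 0).obj T ⟶
        ((DerivedCategory.singleFunctor A 0).obj N)⟦k⟧, f = 0) ∧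
      (∀ k : ℤ, k < 0 → ∀ f : (DerivedCategory.singleFunctor A 0).obj T ⟶
        ((DerivedCategory.singleFunctor A 0).obj N)⟦k⟧, f = 0)}) ∧
    -- ... `Y` is a cogenerating class ...
    (∀ M : A, ∃ Y ∈ YSet T, ∃ ι : M ⟶ Y, Mono ι) ∧
    -- ... and every object admits an exact sequence `0 → M → Y → T^1 → ⋯ → T^n → 0`.
    (∀ M : A, ∃ S : ComposableArrows A (n + 1), S.Exact ∧ Mono (S.map' 0 1) ∧
      Epi (S.map' n (n + 1)) ∧ S.obj' 0 = M ∧ S.obj' 1 ∈ YSet T ∧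
      ∀ (i : ℕ) (_ : 2 ≤ i) (h2 : i ≤ n + 1), S.obj' i ∈ addT T) := by
  have (I : Type v) : PreservesColimit (Discrete.functor fun _ : I => T) (singleFunctor A 0) :=
    have : IsIso (sigmaComparison (singleFunctor A 0) fun _ : I => T) := hsame I
    PreservesCoproduct.of_iso_comparison (singleFunctor A 0) fun _ : I => T
  obtain ⟨𝒢, h𝒢, hres⟩ := hT3
  have hres' : ∀ G ∈ 𝒢, HasFiniteCoresolution (addT T) (n + 1) G := by
    intro G hG
    obtain ⟨S, hS, hfirst, hlast, rfl, hP⟩ := hres G hG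
    exact hasFiniteCoresolution_of_composableArrows hS hfirst hlast hP
  have hseq := exists_shortExact_YSet_of_tilting (fun I k hk => hext k hk I)
    (fun N => homVanishesAbove_iff.2 fun k hk => hpd k hk N) h𝒢 hres'
  refine ⟨?_, fun M => ?_, fun M => ?_⟩
  · exact Set.ext fun N =>
      ⟨fun hN => ⟨hN, fun k hk => hom_single_shift_eq_zero_of_neg hk⟩, And.left⟩
  · obtain ⟨Y, _, f, _, _, hE, hY, _⟩ := hseq M
    exact ⟨Y, hY, f, hE.mono_f⟩
  · obtain ⟨Y, _, _, _, _, hE, hY, hZ⟩ := hseq M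
    obtain ⟨S, hS, hfirst, hlast, h₀, h₁, hP⟩ := exists_composableArrows_of_shortExact hE hZ
    exact ⟨S, hS, hfirst, hlast, h₀, h₁ ▸ hY, hP⟩
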